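/- Let n ≥ 1, σ > 0, let M : ℝⁿ → ℝⁿ be a linear map, and define the kernel κ : ℝⁿ × ℝⁿ → ℝ by κ(x, x') = σ² exp(−‖M(x − x')‖² / 2), where ‖·‖ is the Euclidean norm. Then for all x, x₁, x₂ ∈ ℝⁿ, |κ(x, x₁) − κ(x, x₂)| ≤ σ² · exp(−1/2) · ‖M(x₁ − x₂)‖. -/

import Mathlib

/-!
The Gaussian profile `t ↦ exp (-t ^ 2 / 2)` is steepest at its inflection points `t = ±1`, where
the slope has absolute value `exp (-1 / 2)`, so by the mean value inequality this is a Lipschitz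
constant. Since `‖M (x - x')‖ = dist (M x) (M x')`, the kernel is `σ ^ 2` times this profile
composed with a distance, and distance functions are `1`-Lipschitz.
-/

open Real

theorem hasDerivAt_exp_neg_sq_div_two (t : ℝ) :
    HasDerivAt (fun s : ℝ ↦ exp (-s ^ 2 / 2)) (-t * exp (-t ^ 2 / 2)) t := by
  have exponent_deriv : HasDerivAt (fun s : ℝ ↦ -s ^ 2 / 2) (-t) t :=
    ((hasDerivAt_pow 2 t).fun_neg.div_const 2).congr_deriv (by ring)
  exact exponent_deriv.exp.congr_deriv (mul_comm _ _)

theorem abs_mul_exp_neg_sq_div_two_le (t : ℝ) :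
    |t * exp (-t ^ 2 / 2)| ≤ exp (-1 / 2) := by
  refine abs_le_of_sq_le_sq ?_ (exp_nonneg _)
  calc (t * exp (-t ^ 2 / 2)) ^ 2
    _ = t ^ 2 * exp (-t ^ 2) := by rw [mul_pow, ← exp_nat_mul]; ring_nf
    _ ≤ exp (-1) := mul_exp_neg_le_exp_neg_one (t ^ 2)
    _ = exp (-1 / 2) ^ 2 := by rw [← exp_nat_mul]; ring_nf

theorem abs_exp_neg_sq_div_two_sub_le (a b : ℝ) :
    |exp (-a ^ 2 / 2) - exp (-b ^ 2 / 2)| ≤ exp (-1 / 2) * |a - b| := by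
  have deriv_bound (t : ℝ) : ‖-t * exp (-t ^ 2 / 2)‖ ≤ exp (-1 / 2) := by
    simpa only [neg_mul, norm_neg, norm_eq_abs] using abs_mul_exp_neg_sq_div_two_le t
  exact convex_univ.norm_image_sub_le_of_norm_hasDerivWithin_le
    (fun t _ ↦ (hasDerivAt_exp_neg_sq_div_two t).hasDerivWithinAt) (fun t _ ↦ deriv_bound t)
    (Set.mem_univ b) (Set.mem_univ a)

theorem abs_exp_neg_dist_sq_div_two_sub_le {X : Type*} [PseudoMetricSpace X] (x y z : X) :
    |exp (-dist x y ^ 2 / 2) - exp (-dist x z ^ 2 / 2)| ≤ exp (-1 / 2) * dist y z := by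
  have dist_lipschitz : |dist x y - dist x z| ≤ dist y z := by
    simpa only [dist_comm x] using abs_dist_sub_le y z x
  exact (abs_exp_neg_sq_div_two_sub_le _ _).trans (by gcongr)

theorem ardse_kernel_lipschitz_general {E F 𝓕 : Type*} [AddGroup E] [SeminormedAddCommGroup F]
    [FunLike 𝓕 E F] [AddMonoidHomClass 𝓕 E F] (σ : ℝ) (M : 𝓕) (κ : E → E → ℝ)
    (hκ : ∀ x x', κ x x' = σ ^ 2 * exp (-‖M (x - x')‖ ^ 2 / 2)) (x x₁ x₂ : E) :
    |κ x x₁ - κ x x₂| ≤ σ ^ 2 * exp (-1 / 2) * ‖M (x₁ - x₂)‖ := by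
  simp only [map_sub, ← dist_eq_norm] at hκ ⊢
  rw [hκ, hκ, ← mul_sub, abs_mul, abs_of_nonneg (sq_nonneg σ), mul_assoc]
  gcongr
  exact abs_exp_neg_dist_sq_div_two_sub_le (M x) (M x₁) (M x₂)

/-- Corollary: Lipschitz continuity of the ARD-SE kernel. -/
theorem ardse_kernel_lipschitz (n : ℕ) (hn : 1 ≤ n) (σ : ℝ) (hσ : 0 < σ)
    (M : EuclideanSpace ℝ (Fin n) →ₗ[ℝ] EuclideanSpace ℝ (Fin n))
    (κ : EuclideanSpace ℝ (Fin n) → EuclideanSpace ℝ (Fin n) → ℝ)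
    (hκ : ∀ x x', κ x x' = σ ^ 2 * Real.exp (-‖M (x - x')‖ ^ 2 / 2)) :
    ∀ x x₁ x₂ : EuclideanSpace ℝ (Fin n),
      |κ x x₁ - κ x x₂| ≤ σ ^ 2 * Real.exp (-1 / 2) * ‖M (x₁ - x₂)‖ :=
  ardse_kernel_lipschitz_general σ M κ hκ
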